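/- arXiv:1802.05309 — 2 statements merged into one kernel-verified Lean document; each statement's English description precedes it below -/
import Mathlib

section
/- Let {u_n} be a linear recurrence sequence of complex numbers and c ∈ ℂ. Then the set {n ∈ ℕ₀ : u_n = c} is a finite union of arithmetic progressions (where singletons count as arithmetic progressions). -/
/-- An arithmetic progression `{a*k + b : k ∈ ℕ₀}`; a singleton when `a = 0`. -/
def IsArithProg (S : Set ℕ) : Prop :=
  ∃ a b : ℕ, S = {x : ℕ | ∃ k : ℕ, x = a * k + b}

open Polynomial in
/-- Termwise summability of the `p`-adic series. -/
lemma sml_summable (p : ℕ) [Fact p.Prime] (b : ℕ → ℤ_[p]) :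
    Summable (fun k => (p : ℤ_[p]) ^ k * b k) := by
  have hp1 : (1 : ℝ) < p := by exact_mod_cast (Fact.out : p.Prime).one_lt
  apply Summable.of_norm_bounded (g := fun k => ((p : ℝ)⁻¹) ^ k)
  · exact summable_geometric_of_lt_one (by positivity) (inv_lt_one_of_one_lt₀ hp1)
  · intro k
    rw [norm_mul, norm_pow, PadicInt.norm_p]
    exact mul_le_of_le_one_right (by positivity) (PadicInt.norm_le_one _)

open Polynomial in
lemma sml_dvd (p : ℕ) [Fact p.Prime] (t : ℕ) : ∀ (Q : ℕ → ℤ_[p][X]),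
    (∀ k, (Q k).natDegree ≤ k) → ∀ S : Finset ℤ_[p], S.card = t →
    (∀ a ∈ S, ∑' k, (p : ℤ_[p]) ^ k * (Q k).eval a = 0) →
    ∀ x, (p : ℤ_[p]) ^ t ∣ ∑' k, (p : ℤ_[p]) ^ k * (Q k).eval x := by
  induction t with
  | zero => intro Q _ S _ _ x; simp
  | succ t ih =>
    intro Q hQ S hS hz x
    classical
    obtain ⟨a, S', haS, rfl, hS'⟩ := Finset.card_eq_succ.mp hS
    set R : ℕ → ℤ_[p][X] := fun k => (Q (k + 1)) /ₘ (X - C a) with hR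
    have hRd : ∀ k, (R k).natDegree ≤ k := by
      intro k
      rw [hR]
      simp only
      rw [natDegree_divByMonic _ (monic_X_sub_C a), natDegree_X_sub_C]
      have := hQ (k + 1)
      omega
    have key : ∀ y, ∑' k, (p : ℤ_[p]) ^ k * (Q k).eval y
        = p * (y - a) * ∑' k, (p : ℤ_[p]) ^ k * (R k).eval y := by
      intro y
      have h0 : ∑' k, (p : ℤ_[p]) ^ k * (Q k).eval a = 0 := hz a (by simp)
      have h1 : ∑' k, (p : ℤ_[p]) ^ k * (Q k).eval y
        = ∑' k, (p : ℤ_[p]) ^ k * ((Q k).eval y - (Q k).eval a) := by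
        rw [← sub_zero (∑' k, (p : ℤ_[p]) ^ k * (Q k).eval y), ← h0,
          ← (sml_summable p _).tsum_sub (sml_summable p _)]
        simp only [mul_sub]
      rw [h1, (sml_summable p _).tsum_eq_zero_add, ← (sml_summable p _).tsum_mul_left]
      have hc : (Q 0).eval y - (Q 0).eval a = 0 := by
        have := hQ 0
        rw [eq_C_of_natDegree_le_zero this]; simp
      rw [hc, mul_zero, zero_add]
      congr 1
      ext1 k
      have h2 := congrArg (eval y) (modByMonic_add_div (Q (k+1)) (X - C a))
      rw [modByMonic_X_sub_C_eq_C_eval] at h2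
      simp only [eval_add, eval_C, eval_mul, eval_sub, eval_X] at h2
      rw [← h2, hR]
      ring
    have hp0 : (p : ℤ_[p]) ≠ 0 := by exact_mod_cast (Fact.out : p.Prime).ne_zero
    rw [key x, pow_succ']
    rw [mul_assoc]
    apply mul_dvd_mul_left
    apply Dvd.dvd.mul_left
    refine ih R hRd S' hS' ?_ x
    intro b hb
    have h3 := hz b (by simp [hb])
    rw [key b] at h3
    have hba : b - a ≠ 0 := by
      rw [sub_ne_zero]; rintro rfl; exact haS hb
    rcases mul_eq_zero.mp h3 with h | h
    · rcases mul_eq_zero.mp h with h | h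
      · exact absurd h hp0
      · exact absurd h hba
    · exact h

lemma sml_eq_zero (p : ℕ) [Fact p.Prime] (z : ℤ_[p]) (h : ∀ t : ℕ, (p : ℤ_[p]) ^ t ∣ z) :
    z = 0 := by
  rw [← PadicInt.ext_of_toZModPow]
  intro n
  rw [map_zero, ← RingHom.mem_ker, PadicInt.ker_toZModPow, Ideal.mem_span_singleton]
  exact h n

lemma sml_factorial (p : ℕ) [Fact p.Prime] (k : ℕ) : ((k.factorial : ℕ) : ℤ_[p]) ∣ (p : ℤ_[p]) ^ k := by
  have h1 : ((k.factorial : ℕ) : ℤ_[p]) ≠ 0 := by exact_mod_cast k.factorial_ne_zero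
  have h2 := PadicInt.unitCoeff_spec h1
  have h3 : ((k.factorial : ℕ) : ℤ_[p]).valuation ≤ k := by
    rw [show ((k.factorial : ℕ) : ℤ_[p]).valuation = padicValNat p k.factorial from ?_]
    · exact padicValNat_factorial_le (p := p) k
    · have := PadicInt.valuation_coe (p := p) ((k.factorial : ℕ) : ℤ_[p])
      rw [PadicInt.coe_natCast, Padic.valuation_natCast] at this
      exact_mod_cast this.symm
  rw [h2]
  exact (Units.mul_left_dvd).mpr (pow_dvd_pow _ h3)

lemma sml_zero (p : ℕ) [Fact p.Prime] (b : ℕ → ℤ_[p]) (f : ℕ → ℤ_[p])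
    (hf : ∀ n, f n = ∑ k ∈ Finset.range (n + 1), (n.choose k : ℤ_[p]) * (p ^ 2) ^ k * b k)
    (hinf : {n | f n = 0}.Infinite) (n : ℕ) : f n = 0 := by
  choose e he using sml_factorial p
  set Q : ℕ → Polynomial ℤ_[p] := fun k => Polynomial.C (e k * b k) * descPochhammer ℤ_[p] k with hQ
  have hQd : ∀ k, (Q k).natDegree ≤ k := by
    intro k
    refine (Polynomial.natDegree_C_mul_le _ _).trans ?_
    rw [descPochhammer_natDegree]
  have hfQ : ∀ n : ℕ, f n = ∑' k, (p : ℤ_[p]) ^ k * (Q k).eval (n : ℤ_[p]) := by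
    intro n
    rw [hf, tsum_eq_sum (s := Finset.range (n + 1))]
    · apply Finset.sum_congr rfl
      intro k _
      simp only [hQ, Polynomial.eval_mul, Polynomial.eval_C, descPochhammer_eval_eq_descFactorial]
      rw [Nat.descFactorial_eq_factorial_mul_choose, ← pow_mul, mul_comm 2 k, pow_mul, sq]
      nth_rewrite 2 [he k]
      push_cast
      ring
    · intro k hk
      simp only [hQ, Polynomial.eval_mul, Polynomial.eval_C, descPochhammer_eval_eq_descFactorial]
      rw [Nat.descFactorial_eq_zero_iff_lt.mpr (by simpa using hk)]
      simp
  apply sml_eq_zero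
  intro t
  obtain ⟨S, hS, hSc⟩ := hinf.exists_subset_card_eq t
  rw [hfQ]
  refine sml_dvd p t Q hQd (S.map ⟨Nat.cast, Nat.cast_injective⟩) (by simpa using hSc) ?_ _
  intro a ha
  simp only [Finset.mem_map, Function.Embedding.coeFn_mk] at ha
  obtain ⟨m, hm, rfl⟩ := ha
  rw [← hfQ]
  exact hS hm

lemma sml_finite_quot (p : ℕ) [Fact p.Prime] (S : Type*) [CommRing S] [Algebra ℤ_[p] S]
    [Module.Finite ℤ_[p] S] : Finite (S ⧸ Ideal.span {(p : S) ^ 2}) := by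
  obtain ⟨k, g, hg⟩ := Module.Finite.exists_fin' ℤ_[p] S
  have : NeZero (p ^ 2) := ⟨pow_ne_zero _ (Fact.out : p.Prime).ne_zero⟩
  let F : (Fin k → ZMod (p ^ 2)) → S ⧸ Ideal.span {(p : S) ^ 2} := fun v =>
    Ideal.Quotient.mk _ (g (fun i => ((v i).val : ℤ_[p])))
  apply Finite.of_surjective F
  intro q
  obtain ⟨s, rfl⟩ := Ideal.Quotient.mk_surjective q
  obtain ⟨w, rfl⟩ := hg s
  refine ⟨fun i => PadicInt.toZModPow 2 (w i), ?_⟩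
  rw [Ideal.Quotient.eq, ← map_sub, Ideal.mem_span_singleton]
  have : ∀ i, (p : ℤ_[p]) ^ 2 ∣ (((PadicInt.toZModPow 2 (w i)).val : ℤ_[p]) - w i) := by
    intro i
    rw [← Ideal.mem_span_singleton, ← PadicInt.ker_toZModPow, RingHom.mem_ker]
    simp
  choose z hz using this
  refine ⟨g z, ?_⟩
  have h2 : (fun i => ((PadicInt.toZModPow 2 (w i)).val : ℤ_[p])) - w = ((p : ℤ_[p]) ^ 2) • z := by
    ext1 i; exact hz i
  rw [h2, map_smul, Algebra.smul_def]
  simp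

lemma sml_core (p : ℕ) [Fact p.Prime] (T M : Type*) [CommRing T] [Algebra ℤ_[p] T]
    [AddCommGroup M] [Module ℤ_[p] M] [Module.IsTorsionFree ℤ_[p] M] (x y : T)
    (hx : IsIntegral ℤ_[p] x) (hy : IsIntegral ℤ_[p] y) (hxy : x * y = 1) :
    ∃ N > 0, ∀ l : T →ₗ[ℤ_[p]] M, ∀ r : ℕ,
      {n : ℕ | l (x ^ (r + N * n)) = 0}.Infinite → ∀ n, l (x ^ (r + N * n)) = 0 := by
  let S := Algebra.adjoin ℤ_[p] ({x, y} : Set T)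
  have : Module.Finite ℤ_[p] S := Algebra.finite_adjoin_of_finite_of_isIntegral (by simp)
    (by rintro z (rfl | rfl) <;> assumption)
  have := sml_finite_quot p S
  let x' : S := ⟨x, Algebra.subset_adjoin (by simp)⟩
  let y' : S := ⟨y, Algebra.subset_adjoin (by simp)⟩
  have hxy' : x' * y' = 1 := Subtype.ext hxy
  let q := Ideal.Quotient.mk (Ideal.span {(p : S) ^ 2})
  have hq : q x' * q y' = 1 := by rw [← map_mul, hxy', map_one]
  let U : (S ⧸ Ideal.span {(p : S) ^ 2})ˣ := Units.mkOfMulEqOne _ _ hq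
  obtain ⟨N, hN, hUN⟩ := isOfFinOrder_iff_pow_eq_one.mp (isOfFinOrder_of_finite U)
  have h1 : q (x' ^ N) = q 1 := by
    rw [map_pow, map_one]
    have h := congrArg Units.val hUN
    rwa [Units.val_pow_eq_pow_val, Units.val_one] at h
  rw [Ideal.Quotient.eq, Ideal.mem_span_singleton] at h1
  obtain ⟨B, hB⟩ := h1
  refine ⟨N, hN, fun l r hinf n => ?_⟩
  let l' : S →ₗ[ℤ_[p]] M := l ∘ₗ S.val.toLinearMap
  have hl : ∀ n, l (x ^ n) = l' (x' ^ n) := fun n => by simp [l', x']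
  let W := LinearMap.range l'
  have : Module.Finite ℤ_[p] W := inferInstance
  have : Module.Free ℤ_[p] W := inferInstance
  let bs := Module.Free.chooseBasis ℤ_[p] W
  let l'' := l'.rangeRestrict
  have hl2 : ∀ n, l (x ^ n) = 0 ↔ l'' (x' ^ n) = 0 := fun n => by
    rw [hl, ← Subtype.coe_inj]; rfl
  simp only [hl2] at hinf ⊢
  apply bs.repr.injective
  rw [map_zero]
  ext i
  refine sml_zero p (fun k => bs.repr (l'' (x' ^ r * B ^ k)) i)
    (fun n => bs.repr (l'' (x' ^ (r + N * n))) i) ?_ ?_ n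
  · intro n
    have h3 : x' ^ (r + N * n) = ∑ k ∈ Finset.range (n + 1),
        ((n.choose k : ℤ_[p]) * ((p : ℤ_[p]) ^ 2) ^ k) • (x' ^ r * B ^ k) := by
      rw [pow_add, pow_mul, sub_eq_iff_eq_add.mp hB, add_pow, Finset.mul_sum]
      apply Finset.sum_congr rfl
      intro k _
      rw [Algebra.smul_def]
      simp only [map_mul, map_pow, map_natCast]
      ring
    simp only [h3, map_sum, map_smul, Finsupp.finsetSum_apply, Finsupp.smul_apply, smul_eq_mul]
  · refine hinf.mono fun n hn => ?_
    simp only [Set.mem_ofPred_eq] at hn ⊢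
    rw [hn]; simp
lemma sml_alg_indep (p : ℕ) [Fact p.Prime] {ι : Type} (t : ι → ℂ) (ht : IsTranscendenceBasis ℤ t) :
    ∃ y : ι → ℚ_[p], AlgebraicIndependent ℤ y := by
  obtain ⟨κ, v, hv⟩ := exists_isTranscendenceBasis' ℤ ℚ_[p]
  have hv' : IsTranscendenceBasis ℤ (algebraMap ℚ_[p] (AlgebraicClosure ℚ_[p]) ∘ v) :=
    hv.algebraMap_comp
  have hZ : Cardinal.mk ℤ ≤ Cardinal.aleph0 := by simp
  have hQ : Cardinal.continuum ≤ Cardinal.mk (AlgebraicClosure ℚ_[p]) :=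
    (continuum_le_cardinal_of_nontriviallyNormedField ℚ_[p]).trans
      (Cardinal.mk_le_of_injective (algebraMap ℚ_[p] (AlgebraicClosure ℚ_[p])).injective)
  have h1 := IsAlgClosed.cardinal_eq_cardinal_transcendence_basis_of_aleph0_lt _ hv' hZ
    (Cardinal.aleph0_lt_continuum.trans_le hQ)
  have h2 := IsAlgClosed.cardinal_eq_cardinal_transcendence_basis_of_aleph0_lt _ ht hZ
    (by rw [Cardinal.mk_complex]; exact Cardinal.aleph0_lt_continuum)
  simp only [Cardinal.lift_id] at h1 h2
  rw [Cardinal.mk_complex] at h2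
  have h3 : Cardinal.mk ι ≤ Cardinal.mk κ := by rw [← h1, ← h2]; exact hQ
  obtain ⟨j⟩ := h3
  exact ⟨v ∘ j, hv.1.comp j j.injective⟩

lemma sml_alg_indep' (p : ℕ) [Fact p.Prime] {ι : Type} (t : ι → ℂ) (ht : IsTranscendenceBasis ℤ t)
    (t0 : ι → ℤ) :
    ∃ τ : ι → ℤ_[p], (∀ i, PadicInt.toZMod (τ i) = (t0 i : ZMod p)) ∧
      AlgebraicIndependent ℤ (fun i => (τ i : ℚ_[p])) := by
  obtain ⟨y, hy⟩ := sml_alg_indep p t ht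
  have hp1 : (1 : ℝ) < p := by exact_mod_cast (Fact.out : p.Prime).one_lt
  have : ∀ i, ∃ e : ℕ, ‖(p : ℚ_[p]) ^ e * y i‖ ≤ 1 := by
    intro i
    obtain ⟨e, he⟩ := pow_unbounded_of_one_lt ‖y i‖ hp1
    refine ⟨e, ?_⟩
    rw [norm_mul, norm_pow, Padic.norm_p, inv_pow, inv_mul_le_iff₀ (by positivity)]
    linarith
  choose e he using this
  obtain ⟨η, hη⟩ : ∃ η : ι → ℤ_[p], ∀ i, (η i : ℚ_[p]) = (p : ℚ_[p]) ^ e i * y i :=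
    ⟨fun i => ⟨_, he i⟩, fun i => rfl⟩
  let τ : ι → ℤ_[p] := fun i => t0 i + p * η i
  refine ⟨τ, fun i => by simp only [τ, map_add, map_mul, map_intCast, map_natCast, CharP.cast_eq_zero, zero_mul, add_zero], ?_⟩
  have := hy.polynomial_aeval_of_transcendental
    (f := fun i => Polynomial.C ((p : ℤ) ^ (e i + 1)) * Polynomial.X + Polynomial.C (t0 i)) (by
      intro i
      have hne : ((p : ℤ) ^ (e i + 1)) ≠ 0 :=
        pow_ne_zero _ (by exact_mod_cast (Fact.out : p.Prime).ne_zero)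
      apply Polynomial.transcendental
      · rw [Polynomial.natDegree_linear hne]; exact one_ne_zero
      · rw [Polynomial.leadingCoeff_linear hne]; exact mem_nonZeroDivisors_of_ne_zero hne)
  convert this using 2 with i
  simp only [τ, hη, PadicInt.coe_add, PadicInt.coe_mul, PadicInt.coe_intCast, PadicInt.coe_natCast,
    map_add, map_mul, Polynomial.aeval_C, Polynomial.aeval_X]
  simp
  ring

lemma sml_embed (G : Finset ℂ) : ∃ (p : ℕ) (_ : Fact p.Prime)
    (φ : ℂ →+* AlgebraicClosure ℚ_[p]), ∀ g ∈ G, IsIntegral ℤ_[p] (φ g) := by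
  obtain ⟨ι, t, ht⟩ := exists_isTranscendenceBasis' ℤ ℂ
  have halg := ht.isAlgebraic
  obtain ⟨h, hh0, hint⟩ := Algebra.IsAlgebraic.exists_integral_multiples
    (Algebra.adjoin ℤ (Set.range t)) G
  let e := ht.1.aevalEquiv
  let H := e.symm h
  have hH : H ≠ 0 := by simpa [H] using hh0
  obtain ⟨t0, ht0⟩ : ∃ t0 : ι → ℤ, MvPolynomial.eval t0 H ≠ 0 := by
    by_contra! hc
    exact hH (MvPolynomial.funext (by simpa using hc))
  obtain ⟨p, hple, hp⟩ := Nat.exists_infinite_primes ((MvPolynomial.eval t0 H).natAbs + 1)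
  have : Fact p.Prime := ⟨hp⟩
  obtain ⟨τ, hτ, hind⟩ := sml_alg_indep' p t ht t0
  let ψ : Algebra.adjoin ℤ (Set.range t) →+* ℤ_[p] :=
    ((MvPolynomial.aeval τ : MvPolynomial ι ℤ →ₐ[ℤ] ℤ_[p]) : MvPolynomial ι ℤ →+* ℤ_[p]).comp
      (e.symm : Algebra.adjoin ℤ (Set.range t) →+* MvPolynomial ι ℤ)
  have hψ : Function.Injective ψ := by
    have h1 : Function.Injective (MvPolynomial.aeval τ : MvPolynomial ι ℤ →ₐ[ℤ] ℤ_[p]) := by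
      have : AlgebraicIndependent ℤ τ := 
        AlgebraicIndependent.of_comp (algebraMap ℤ_[p] ℚ_[p]).toIntAlgHom hind
      exact this
    exact h1.comp e.symm.injective
  have hu : IsUnit (ψ h) := by
    by_contra hn
    have h1 : ψ h ∈ IsLocalRing.maximalIdeal ℤ_[p] := hn
    rw [← PadicInt.ker_toZMod, RingHom.mem_ker] at h1
    have h2 : PadicInt.toZMod (ψ h) = ((MvPolynomial.eval t0 H : ℤ) : ZMod p) := by
      have : (PadicInt.toZMod.comp ((MvPolynomial.aeval τ : MvPolynomial ι ℤ →ₐ[ℤ] ℤ_[p]) :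
          MvPolynomial ι ℤ →+* ℤ_[p])) = (Int.castRingHom (ZMod p)).comp (MvPolynomial.eval t0) := by
        apply MvPolynomial.ringHom_ext
        · intro r; simp
        · intro i; simp [hτ]
      exact congrArg (fun f => f H) this
    rw [h2, ZMod.intCast_zmod_eq_zero_iff_dvd] at h1
    have := Int.natAbs_dvd_natAbs.mpr h1
    have := Nat.le_of_dvd (by positivity) this
    simp at this
    omega
  let F := AlgebraicClosure ℚ_[p]
  let ψ' : Algebra.adjoin ℤ (Set.range t) →+* F := (algebraMap ℤ_[p] F).comp ψ
  have hinj : Function.Injective (algebraMap ℤ_[p] F) := by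
    rw [IsScalarTower.algebraMap_eq ℤ_[p] ℚ_[p] F]
    exact (algebraMap ℚ_[p] F).injective.comp (IsFractionRing.injective ℤ_[p] ℚ_[p])
  have hψ' : Function.Injective ψ' := hinj.comp hψ
  let : Algebra (Algebra.adjoin ℤ (Set.range t)) F := ψ'.toAlgebra
  have : FaithfulSMul (Algebra.adjoin ℤ (Set.range t)) F :=
    (faithfulSMul_iff_algebraMap_injective _ _).mpr hψ'
  let φ : ℂ →ₐ[Algebra.adjoin ℤ (Set.range t)] F := IsAlgClosed.lift
  have hφ : ∀ a : Algebra.adjoin ℤ (Set.range t), φ a = algebraMap ℤ_[p] F (ψ a) := fun a => φ.commutes a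
  refine ⟨p, inferInstance, φ.toRingHom, fun g hg => ?_⟩
  have h1 : IsIntegral ℤ_[p] (φ.toRingHom (h • g)) := by
    refine IsIntegral.map_of_comp_eq ψ φ.toRingHom ?_ (hint g hg)
    ext a
    exact (hφ a).symm
  obtain ⟨w, hw⟩ := hu
  have h2 : φ.toRingHom g = algebraMap ℤ_[p] F ↑w⁻¹ * φ.toRingHom (h • g) := by
    have : φ.toRingHom (h • g) = algebraMap ℤ_[p] F w * φ.toRingHom g := by
      rw [hw, ← hφ, Algebra.smul_def, map_mul]; rfl
    rw [this, ← mul_assoc, ← map_mul]; simp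
  rw [h2]
  exact isIntegral_algebraMap.mul h1


open Polynomial in
/-- The linear functional on polynomials sending `X ^ n` to `v n`. -/
noncomputable def smlL {R : Type*} [CommRing R] (v : ℕ → R) : R[X] →ₗ[R] R :=
  Polynomial.lsum (fun i => (LinearMap.mulRight R (v i)))

open Polynomial in
lemma smlL_monomial {R : Type*} [CommRing R] (v : ℕ → R) (n : ℕ) (a : R) :
    smlL v (monomial n a) = a * v n := by
  simp [smlL, Polynomial.lsum_apply]

open Polynomial in
lemma smlL_pow {R : Type*} [CommRing R] (v : ℕ → R) (n : ℕ) :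
    smlL v (X ^ n) = v n := by
  rw [← monomial_one_right_eq_X_pow, smlL_monomial, one_mul]

open Polynomial in
lemma smlL_mul {R : Type*} [CommRing R] (v : ℕ → R) (P : R[X])
    (h : ∀ n, smlL v (P * X ^ n) = 0) (Q : R[X]) : smlL v (P * Q) = 0 := by
  induction Q using Polynomial.induction_on' with
  | add p q hp hq => rw [mul_add, map_add, hp, hq, add_zero]
  | monomial n a =>
    rw [← C_mul_X_pow_eq_monomial, mul_left_comm, C_mul', map_smul, h, smul_zero]

open Polynomial in
lemma smlL_map {R S : Type*} [CommRing R] [CommRing S] (φ : R →+* S) (v : ℕ → R) (Q : R[X]) :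
    smlL (fun n => φ (v n)) (Q.map φ) = φ (smlL v Q) := by
  induction Q using Polynomial.induction_on' with
  | add p q hp hq => rw [Polynomial.map_add, map_add, hp, hq, map_add, map_add]
  | monomial n a => rw [map_monomial, smlL_monomial, smlL_monomial, map_mul]

open Polynomial in
lemma smlL_shift {R : Type*} [CommRing R] (v : ℕ → R) (s : ℕ) (Q : R[X]) :
    smlL (fun n => v (n + s)) Q = smlL v (X ^ s * Q) := by
  induction Q using Polynomial.induction_on' with
  | add p q hp hq => rw [mul_add, map_add, hp, hq, map_add]
  | monomial n a => rw [X_pow_mul, monomial_mul_X_pow, smlL_monomial, smlL_monomial]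

open Polynomial in
lemma smlL_sub_const {R : Type*} [CommRing R] (v : ℕ → R) (c : R) (Q : R[X]) :
    smlL (fun n => v n - c) Q = smlL v Q - Q.eval 1 * c := by
  induction Q using Polynomial.induction_on' with
  | add p q hp hq => rw [map_add, hp, hq, map_add, eval_add]; ring
  | monomial n a => rw [smlL_monomial, smlL_monomial, eval_monomial]; ring

open Polynomial in
lemma sml_poly (v : ℕ → ℂ) (P : ℂ[X]) (hP : P.Monic) (h0 : P.coeff 0 ≠ 0)
    (hrec : ∀ Q, smlL v (P * Q) = 0) :
    ∃ N > 0, ∀ r, {n : ℕ | v (r + N * n) = 0}.Infinite → ∀ n, v (r + N * n) = 0 := by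
  classical
  obtain ⟨p, hp, φ, hφ⟩ := sml_embed
    (insert (P.coeff 0)⁻¹ ((Finset.range (P.natDegree + 1)).image P.coeff))
  have hco : ∀ i, IsIntegral ℤ_[p] (φ (P.coeff i)) := by
    intro i
    by_cases hi : i ≤ P.natDegree
    · apply hφ
      apply Finset.mem_insert_of_mem
      exact Finset.mem_image_of_mem _ (by simpa [Nat.lt_succ_iff] using hi)
    · rw [coeff_eq_zero_of_natDegree_lt (by omega), map_zero]; exact isIntegral_zero
  have hinv : IsIntegral ℤ_[p] (φ (P.coeff 0)⁻¹) := hφ _ (Finset.mem_insert_self _ _)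
  let F := AlgebraicClosure ℚ_[p]
  have hinj : Function.Injective (algebraMap ℤ_[p] F) := by
    rw [IsScalarTower.algebraMap_eq ℤ_[p] ℚ_[p] F]
    exact (algebraMap ℚ_[p] F).injective.comp (IsFractionRing.injective ℤ_[p] ℚ_[p])
  have : FaithfulSMul ℤ_[p] F := (faithfulSMul_iff_algebraMap_injective _ _).mpr hinj
  have : Module.IsTorsionFree ℤ_[p] F := inferInstance
  let P' : F[X] := P.map φ
  have hP' : P'.Monic := hP.map φ
  let T := AdjoinRoot P'
  let x : T := AdjoinRoot.root P'
  have hof : ∀ a : F, IsIntegral ℤ_[p] a → IsIntegral ℤ_[p] (AdjoinRoot.of P' a : T) := by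
    intro a ha
    exact ha.map (IsScalarTower.toAlgHom ℤ_[p] F T)
  -- `x` is integral
  have hx : IsIntegral ℤ_[p] x := by
    let O := integralClosure ℤ_[p] F
    have hl : P' ∈ Polynomial.lifts (algebraMap O F) := by
      rw [Polynomial.lifts_iff_coeff_lifts]
      intro n
      refine ⟨⟨P'.coeff n, ?_⟩, rfl⟩
      show IsIntegral _ _
      rw [coeff_map]; exact hco n
    obtain ⟨q, hq, -, hqm⟩ := Polynomial.lifts_and_natDegree_eq_and_monic hl hP'
    have : IsIntegral O x := by
      refine ⟨q, hqm, ?_⟩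
      have h1 : (algebraMap O T) = (AdjoinRoot.of P').comp (algebraMap O F) := rfl
      rw [h1, ← eval₂_map, hq]
      exact AdjoinRoot.eval₂_root P'
    exact isIntegral_trans x this
  -- its inverse
  let z : T := ((P'.divX).eval₂ (AdjoinRoot.of P') x)
  have hz : IsIntegral ℤ_[p] z := by
    simp only [z]
    rw [eval₂_eq_sum_range]
    apply IsIntegral.sum
    intro i _
    apply IsIntegral.mul
    · apply hof
      rw [coeff_divX, coeff_map]; exact hco _
    · exact hx.pow i
  let y : T := - (AdjoinRoot.of P' (φ (P.coeff 0)⁻¹)) * z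
  have hy : IsIntegral ℤ_[p] y := (hof _ hinv).neg.mul hz
  have hxy : x * y = 1 := by
    have h1 : z * x + AdjoinRoot.of P' (φ (P.coeff 0)) = 0 := by
      have := AdjoinRoot.eval₂_root P'
      rw [← divX_mul_X_add P', eval₂_add, eval₂_mul, eval₂_X, eval₂_C, divX_mul_X_add P', coeff_map] at this
      exact this
    have h2 : AdjoinRoot.of P' (φ (P.coeff 0)⁻¹) * AdjoinRoot.of P' (φ (P.coeff 0)) = 1 := by
      rw [← map_mul, ← map_mul, inv_mul_cancel₀ h0, map_one, map_one]
    simp only [y]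
    linear_combination (- AdjoinRoot.of P' (φ (P.coeff 0)⁻¹)) * h1 + h2
  obtain ⟨N, hN, hmain⟩ := sml_core p T F x y hx hy hxy
  have hrec' : ∀ Q, smlL (fun n => φ (v n)) (P' * Q) = 0 := by
    apply smlL_mul
    intro n
    have := smlL_map φ v (P * X ^ n)
    rw [hrec, map_zero, Polynomial.map_mul, Polynomial.map_pow, map_X] at this
    exact this
  let l : T →ₗ[ℤ_[p]] F :=
    ((smlL (fun n => φ (v n))).comp (AdjoinRoot.modByMonicHom hP')).restrictScalars ℤ_[p]
  have hl : ∀ n, l (x ^ n) = φ (v n) := by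
    intro n
    have h1 : x ^ n = AdjoinRoot.mk P' (X ^ n) := by
      rw [map_pow, AdjoinRoot.mk_X]
    show smlL (fun n => φ (v n)) (AdjoinRoot.modByMonicHom hP' (x ^ n)) = _
    rw [h1, AdjoinRoot.modByMonicHom_mk]
    have h2 := congrArg (smlL (fun n => φ (v n))) (modByMonic_add_div (X ^ n) P')
    rw [map_add, hrec', add_zero, smlL_pow] at h2
    exact h2
  refine ⟨N, hN, fun r hr n => ?_⟩
  have := hmain l r
  simp only [hl, map_eq_zero] at this
  exact this hr n

lemma sml_comb (Z : Set ℕ) (s N : ℕ) (hN : 0 < N)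
    (h : ∀ r, {n : ℕ | r + N * n + s ∈ Z}.Infinite → ∀ n, r + N * n + s ∈ Z) :
    ∃ (r : ℕ) (F : Fin r → Set ℕ), (∀ i, IsArithProg (F i)) ∧ Z = ⋃ i, F i := by
  classical
  let A : Set ℕ := {r | r < N ∧ {n : ℕ | r + N * n + s ∈ Z}.Infinite}
  let D : Set ℕ := {z | z ∈ Z ∧ (z < s ∨ ∃ r < N, r ∉ A ∧ ∃ n, z = r + N * n + s)}
  have hA : A.Finite := (Set.finite_lt_nat N).subset fun r hr => hr.1
  have hD : D.Finite := by
    have h1 : D ⊆ {z | z < s} ∪ ⋃ r ∈ {r | r < N ∧ r ∉ A},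
        (fun n => r + N * n + s) '' {n : ℕ | r + N * n + s ∈ Z} := by
      rintro z ⟨hz, hz1 | ⟨r, hr, hrA, n, rfl⟩⟩
      · exact Or.inl hz1
      · exact Or.inr (Set.mem_biUnion (show r ∈ {r | r < N ∧ r ∉ A} from ⟨hr, hrA⟩) ⟨n, hz, rfl⟩)
    refine Set.Finite.subset ((Set.finite_lt_nat s).union (Set.Finite.biUnion
      ((Set.finite_lt_nat N).subset fun r hr => hr.1) ?_)) h1
    rintro r ⟨hr, hrA⟩
    apply Set.Finite.image
    by_contra hc
    exact hrA ⟨hr, hc⟩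
  have : Finite A := hA
  have : Finite D := hD
  let G : A ⊕ D → Set ℕ := Sum.elim (fun a => {x | ∃ k, x = N * k + (a + s)})
    (fun d => {x | ∃ k, x = 0 * k + (d : ℕ)})
  obtain ⟨r, ⟨e⟩⟩ := Finite.exists_equiv_fin (A ⊕ D)
  refine ⟨r, fun i => G (e.symm i), fun i => ?_, ?_⟩
  · show IsArithProg (G (e.symm i))
    rcases e.symm i with a | d
    · exact ⟨N, a + s, rfl⟩
    · exact ⟨0, d, rfl⟩
  · rw [e.symm.surjective.iUnion_comp G]
    ext z
    rw [Set.mem_iUnion]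
    constructor
    · intro hz
      by_cases hzs : z < s
      · exact ⟨Sum.inr ⟨z, hz, Or.inl hzs⟩, ⟨0, by simp⟩⟩
      · have hz2 : z = (z - s) % N + N * ((z - s) / N) + s := by
          rw [Nat.mod_add_div]; omega
        by_cases hr : (z - s) % N ∈ A
        · exact ⟨Sum.inl ⟨_, hr⟩, ⟨(z - s) / N, by rw [← add_assoc, add_comm (N * _)]; exact hz2⟩⟩
        · exact ⟨Sum.inr ⟨z, hz, Or.inr ⟨_, Nat.mod_lt _ hN, hr, _, hz2⟩⟩, ⟨0, by simp⟩⟩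
    · rintro ⟨a | d, k, rfl⟩
      · have := h a a.2.2 k
        rwa [add_comm (a : ℕ), add_assoc] at this
      · simpa using d.2.1

/-- Skolem–Mahler–Lech. -/
theorem stmt2 (u : ℕ → ℂ) (m : ℕ) (hm : 0 < m) (c : Fin m → ℂ)
    (hrec : ∀ n : ℕ, u (n + m) + ∑ i : Fin m, c i * u (n + i) = 0)
    (cst : ℂ) :
    ∃ (r : ℕ) (F : Fin r → Set ℕ), (∀ i, IsArithProg (F i)) ∧
      {n : ℕ | u n = cst} = ⋃ i, F i := by
  let P0 : Polynomial ℂ := Polynomial.X ^ m +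
    ∑ i : Fin m, Polynomial.C (c i) * Polynomial.X ^ (i : ℕ)
  have hP0 : P0.Monic := by
    apply Polynomial.monic_X_pow_add
    refine (Polynomial.degree_sum_le _ _).trans_lt ?_
    rw [Finset.sup_lt_iff (by exact WithBot.bot_lt_coe m)]
    intro i _
    exact (Polynomial.degree_C_mul_X_pow_le _ _).trans_lt (by exact_mod_cast i.2)
  have hP0rec : ∀ Q, smlL u (P0 * Q) = 0 := by
    apply smlL_mul
    intro n
    rw [← hrec n]
    simp only [P0, add_mul, Finset.sum_mul, map_add, map_sum, mul_assoc, ← pow_add,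
      Polynomial.C_mul', map_smul, smlL_pow, smul_eq_mul, smul_mul_assoc]
    simp only [add_comm n]
  let P1 : Polynomial ℂ := P0 * (Polynomial.X - Polynomial.C 1)
  have hP1 : P1.Monic := hP0.mul (Polynomial.monic_X_sub_C 1)
  have hP1rec : ∀ Q, smlL (fun n => u n - cst) (P1 * Q) = 0 := by
    intro Q
    rw [smlL_sub_const, mul_assoc, hP0rec]
    simp
  obtain ⟨P2, hP2, hnd⟩ := Polynomial.exists_eq_pow_rootMultiplicity_mul_and_not_dvd P1 hP1.ne_zero 0
  rw [Polynomial.C_0, sub_zero] at hP2 hnd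
  set s := P1.rootMultiplicity 0
  have hP2m : P2.Monic := by
    refine Polynomial.Monic.of_mul_monic_left (Polynomial.monic_X_pow s) ?_
    rw [← hP2]; exact hP1
  obtain ⟨N, hN, hmain⟩ := sml_poly (fun n => u (n + s) - cst) P2 hP2m
    (fun h => hnd (Polynomial.X_dvd_iff.mpr h)) (by
      intro Q
      rw [smlL_shift (fun n => u n - cst) s, ← mul_assoc, ← hP2, hP1rec])
  refine sml_comb _ s N hN fun r hr n => ?_
  simp only [sub_eq_zero] at hmain
  exact hmain r hr n
end

section
/- Let {u_n} be a non-degenerate linear recurrence sequence given by u_n = ∑_{i=1}^s P_i(n) r_i^n with nonzero polynomials P_i and distinct nonzero complex numbers r_i. If the set {n : u_n = c} is infinite for some constant c, then the sequence {u_n} is eventually constant. -/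
/-- `z` is a root of unity. -/
def IsRootOfUnity (z : ℂ) : Prop := ∃ k : ℕ, 0 < k ∧ z ^ k = 1

lemma sml_norm_sub {K : Type*} [NormedField K] [IsUltrametricDist K] (x y : K) :
    ‖x - y‖ ≤ max ‖x‖ ‖y‖ := by
  simpa [sub_eq_add_neg] using IsUltrametricDist.norm_add_le_max x (-y)

lemma sml_norm_le_one_of_monic {K R : Type*} [NormedField K] [IsUltrametricDist K] [CommRing R]
    (ψ : R →+* K) (hψ : ∀ c, ‖ψ c‖ ≤ 1) (w : K) (f : Polynomial R) (hf : f.Monic)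
    (h0 : f.eval₂ ψ w = 0) : ‖w‖ ≤ 1 := by
  by_contra hw
  push Not at hw
  have h1 : w ^ f.natDegree = - ∑ i ∈ Finset.range f.natDegree, ψ (f.coeff i) * w ^ i := by
    rw [Polynomial.eval₂_eq_sum_range, Finset.sum_range_succ] at h0
    rw [hf.coeff_natDegree, map_one, one_mul] at h0
    linear_combination h0
  have hn : f.natDegree ≠ 0 := by
    intro hn
    rw [hn] at h1
    simp at h1
  obtain ⟨n, hn'⟩ := Nat.exists_eq_succ_of_ne_zero hn
  have h2 : ‖w ^ f.natDegree‖ ≤ ‖w‖ ^ n := by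
    rw [h1, norm_neg]
    apply IsUltrametricDist.norm_sum_le_of_forall_le_of_nonneg (by positivity)
    intro i hi
    rw [norm_mul, norm_pow]
    have : i ≤ n := by simp at hi; omega
    calc ‖ψ (f.coeff i)‖ * ‖w‖ ^ i ≤ 1 * ‖w‖ ^ n := by
          gcongr
          · exact hψ _
          · exact hw.le
      _ = _ := one_mul _
  rw [norm_pow, hn', pow_succ] at h2
  have : 0 < ‖w‖ ^ n := by positivity
  nlinarith

lemma sml_eval_close {K ι : Type*} [NormedField K] [IsUltrametricDist K]
    (τ : ι → K) (a : ι → ℤ) (hτ : ∀ i, ‖τ i - a i‖ < 1) (g : MvPolynomial ι ℤ) :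
    ‖MvPolynomial.aeval τ g‖ ≤ 1 ∧
    ‖MvPolynomial.aeval τ g - ((MvPolynomial.eval a g : ℤ) : K)‖ < 1 := by
  have hint : ∀ m : ℤ, ‖(m : K)‖ ≤ 1 := IsUltrametricDist.norm_intCast_le_one K
  have key : ∀ x y : K, ‖x + y‖ ≤ max ‖x‖ ‖y‖ := IsUltrametricDist.norm_add_le_max
  have hone : ∀ (x : K) (m : ℤ), ‖x - m‖ < 1 → ‖x‖ ≤ 1 := by
    intro x m h
    have := key (x - m) m
    rw [sub_add_cancel] at this
    exact this.trans (max_le h.le (hint m))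
  suffices h : ‖MvPolynomial.aeval τ g - ((MvPolynomial.eval a g : ℤ) : K)‖ < 1 from
    ⟨hone _ _ h, h⟩
  induction g using MvPolynomial.induction_on with
  | C m => simp
  | add p q hp hq =>
    have := key (MvPolynomial.aeval τ p - ((MvPolynomial.eval a p : ℤ) : K))
      (MvPolynomial.aeval τ q - ((MvPolynomial.eval a q : ℤ) : K))
    simp only [map_add, Int.cast_add]
    rw [add_sub_add_comm]
    exact this.trans_lt (max_lt hp hq)
  | mul_X p i hp =>
    simp only [map_mul, MvPolynomial.aeval_X, MvPolynomial.eval_X, Int.cast_mul]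
    have e : MvPolynomial.aeval τ p * τ i - ((MvPolynomial.eval a p : ℤ) : K) * (a i : K)
      = (MvPolynomial.aeval τ p - ((MvPolynomial.eval a p : ℤ) : K)) * τ i +
        ((MvPolynomial.eval a p : ℤ) : K) * (τ i - a i) := by ring
    rw [e]
    refine (key _ _).trans_lt (max_lt ?_ ?_)
    · rw [norm_mul]
      have := hone _ _ (hτ i)
      nlinarith [norm_nonneg (τ i), norm_nonneg (MvPolynomial.aeval τ p - ((MvPolynomial.eval a p : ℤ) : K))]
    · rw [norm_mul]
      have := hint (MvPolynomial.eval a p)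
      have := hτ i
      nlinarith [norm_nonneg (τ i - a i), norm_nonneg ((MvPolynomial.eval a p : ℤ) : K)]

lemma sml_padic_norm_p (p : ℕ) [Fact p.Prime] : ‖(p : PadicAlgCl p)‖ = (p : ℝ)⁻¹ := by
  rw [← map_natCast (algebraMap ℚ_[p] (PadicAlgCl p)), PadicAlgCl.norm_extends, Padic.norm_p]

lemma sml_padic_norm_int (p : ℕ) [Fact p.Prime] (m : ℤ) (h : ¬ (p : ℤ) ∣ m) :
    ‖(m : PadicAlgCl p)‖ = 1 := by
  rw [← map_intCast (algebraMap ℚ_[p] (PadicAlgCl p)), PadicAlgCl.norm_extends]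
  exact le_antisymm (Padic.norm_int_le_one m)
    (not_lt.mp (fun h' => h ((Padic.norm_intCast_lt_one_iff).1 h')))

open Cardinal in
lemma sml_indep (p : ℕ) [hp : Fact p.Prime] {ι : Type} (hι : #ι ≤ 𝔠) (a : ι → ℤ) :
    ∃ τ : ι → PadicAlgCl p, AlgebraicIndependent ℤ τ ∧ ∀ i, ‖τ i - a i‖ < 1 := by
  obtain ⟨t, ht⟩ := exists_isTranscendenceBasis ℤ (PadicAlgCl p)
  have hc : 𝔠 ≤ #(PadicAlgCl p) := continuum_le_cardinal_of_module ℚ_[p] _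
  have hK : ℵ₀ < #(PadicAlgCl p) := aleph0_lt_continuum.trans_le hc
  have h1 := IsAlgClosed.cardinal_eq_cardinal_transcendence_basis_of_aleph0_lt' _ ht
    (by simp) hK
  have h2 : #ι ≤ #t := hι.trans (hc.trans h1.le)
  obtain ⟨e⟩ := h2
  have hσ : AlgebraicIndependent ℤ (fun i => ((e i : t) : PadicAlgCl p)) := ht.1.comp e e.injective
  have hk : ∀ i, ∃ k : ℕ, ‖((p : PadicAlgCl p)) ^ k * (e i : PadicAlgCl p)‖ < 1 := by
    intro i
    have hp1 : (p : ℝ)⁻¹ < 1 := inv_lt_one_of_one_lt₀ (by exact_mod_cast hp.1.one_lt)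
    obtain ⟨k, hk⟩ := exists_pow_lt_of_lt_one (show 0 < (‖(e i : PadicAlgCl p)‖ + 1)⁻¹ by positivity) hp1
    refine ⟨k, ?_⟩
    rw [norm_mul, norm_pow, sml_padic_norm_p]
    have h3 : 0 < ‖(e i : PadicAlgCl p)‖ + 1 := by positivity
    have h4 := (mul_lt_mul_iff_left₀ h3).2 hk
    rw [inv_mul_cancel₀ h3.ne'] at h4
    have : 0 < (p : ℝ)⁻¹ ^ k := by have := hp.1.pos; positivity
    nlinarith
  choose k hk using hk
  refine ⟨fun i => Polynomial.aeval (e i : PadicAlgCl p)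
    (Polynomial.C (a i) + Polynomial.C ((p : ℤ) ^ k i) * Polynomial.X),
    hσ.polynomial_aeval_of_transcendental (fun i => ?_), fun i => ?_⟩
  · have hpk : ((p : ℤ) ^ k i) ≠ 0 := pow_ne_zero _ (by exact_mod_cast hp.1.ne_zero)
    have hdeg : (Polynomial.C (a i) + Polynomial.C ((p : ℤ) ^ k i) * Polynomial.X).natDegree = 1 := by
      rw [add_comm]
      exact Polynomial.natDegree_linear hpk
    have := (Polynomial.transcendental_X ℤ).aeval
      (Polynomial.C (a i) + Polynomial.C ((p : ℤ) ^ k i) * Polynomial.X) (by rw [hdeg]; simp)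
      (mem_nonZeroDivisors_of_ne_zero (Polynomial.leadingCoeff_ne_zero.2
        (Polynomial.ne_zero_of_natDegree_gt (n := 0) (by rw [hdeg]; simp))))
    simpa using this
  · simpa using hk i

open Cardinal in
lemma sml_embedding {s : ℕ} (r : Fin s → ℂ) (hr : ∀ i, r i ≠ 0) :
    ∃ (p : ℕ) (_ : Fact p.Prime) (φ : ℂ →+* PadicAlgCl p), ∀ i, ‖φ (r i)‖ = 1 := by
  classical
  obtain ⟨t, ht⟩ := exists_isTranscendenceBasis ℤ ℂ
  have halg := ht.isAlgebraic
  obtain ⟨y, hy0, hy⟩ := Algebra.IsAlgebraic.exists_integral_multiples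
    (R := Algebra.adjoin ℤ (Set.range ((↑) : t → ℂ)))
    (Finset.univ.image r ∪ Finset.univ.image (fun i => (r i)⁻¹))
  set E := ht.1.aevalEquiv with hE
  have hg0 : E.symm y ≠ 0 := by simpa using hy0
  obtain ⟨a, ha⟩ : ∃ a : t → ℤ, MvPolynomial.eval a (E.symm y) ≠ 0 := by
    by_contra! hcon
    exact hg0 (MvPolynomial.funext (by simpa using hcon))
  obtain ⟨p, hpge, hp⟩ := Nat.exists_infinite_primes ((MvPolynomial.eval a (E.symm y)).natAbs + 1)
  have : Fact p.Prime := ⟨hp⟩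
  have hpd : ¬ (p : ℤ) ∣ MvPolynomial.eval a (E.symm y) := by
    intro hd
    have := Nat.le_of_dvd (Int.natAbs_pos.2 ha) (Int.natCast_dvd.1 hd)
    omega
  have hcard : #t ≤ 𝔠 := (mk_set_le t).trans (by rw [mk_complex])
  obtain ⟨τ, hτ, hτa⟩ := sml_indep p hcard a
  let ψ : Algebra.adjoin ℤ (Set.range ((↑) : t → ℂ)) →+* PadicAlgCl p :=
    ((MvPolynomial.aeval τ).comp E.symm.toAlgHom).toRingHom
  have hψd : ∀ c, ψ c = MvPolynomial.aeval τ (E.symm c) := fun c => rfl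
  have hψinj : Function.Injective ψ := by
    intro c d h
    exact E.symm.injective (hτ h)
  have hψ1 : ∀ c, ‖ψ c‖ ≤ 1 := fun c => (sml_eval_close τ a hτa (E.symm c)).1
  have hψy : ‖ψ y‖ = 1 := by
    refine le_antisymm (hψ1 y) (not_lt.1 fun hlt => ?_)
    have h2 := (sml_eval_close τ a hτa (E.symm y)).2
    have h3 := sml_padic_norm_int p _ hpd
    have h4 := sml_norm_sub (ψ y)
      (ψ y - ((MvPolynomial.eval a (E.symm y) : ℤ) : PadicAlgCl p))
    rw [sub_sub_cancel, h3] at h4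
    exact absurd h4 (not_le.2 (max_lt hlt h2))
  let : Algebra (Algebra.adjoin ℤ (Set.range ((↑) : t → ℂ))) (PadicAlgCl p) := ψ.toAlgebra
  have : FaithfulSMul (Algebra.adjoin ℤ (Set.range ((↑) : t → ℂ))) (PadicAlgCl p) :=
    (faithfulSMul_iff_algebraMap_injective _ _).2 hψinj
  have : Module.IsTorsionFree (Algebra.adjoin ℤ (Set.range ((↑) : t → ℂ))) (PadicAlgCl p) :=
    inferInstance
  let φ : ℂ →ₐ[Algebra.adjoin ℤ (Set.range ((↑) : t → ℂ))] PadicAlgCl p := IsAlgClosed.lift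
  have hle : ∀ z, IsIntegral (Algebra.adjoin ℤ (Set.range ((↑) : t → ℂ))) (y • z) → ‖φ z‖ ≤ 1 := by
    intro z hz
    have h1 := hz.map φ
    obtain ⟨f, hf, hf0⟩ := h1
    have h2 := sml_norm_le_one_of_monic ψ hψ1 _ f hf hf0
    rw [Algebra.smul_def, map_mul, φ.commutes, norm_mul] at h2
    change ‖ψ y‖ * _ ≤ 1 at h2
    rwa [hψy, one_mul] at h2
  refine ⟨p, inferInstance, φ.toRingHom, fun i => ?_⟩
  have h1 := hle (r i) (hy _ (by simp))
  have h2 := hle (r i)⁻¹ (hy _ (by simp))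
  have h3 : ‖φ (r i)‖ * ‖φ (r i)⁻¹‖ = 1 := by
    rw [← norm_mul, ← map_mul, mul_inv_cancel₀ (hr i)]; simp
  change ‖φ (r i)‖ = 1
  nlinarith [norm_nonneg (φ (r i)), norm_nonneg (φ (r i)⁻¹)]

/-- Interpolable by polynomials with geometrically decaying coefficients. -/
def SmlGood {K : Type*} [NormedField K] (ρ : ℝ) (f : ℕ → K) : Prop :=
  ∃ C : ℝ, 0 ≤ C ∧ ∀ n : ℕ, ∃ R : Polynomial K, (∀ t ≤ n, R.eval (t : K) = f t) ∧
    ∀ k, ‖R.coeff k‖ ≤ C * ρ ^ k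

section
variable {K : Type*} [NormedField K] [IsUltrametricDist K]

lemma SmlGood.add {ρ : ℝ} (hρ : 0 ≤ ρ) {f g : ℕ → K} (hf : SmlGood ρ f) (hg : SmlGood ρ g) :
    SmlGood ρ (fun n => f n + g n) := by
  obtain ⟨C, hC, hf⟩ := hf
  obtain ⟨D, hD, hg⟩ := hg
  refine ⟨max C D, le_max_of_le_left hC, fun n => ?_⟩
  obtain ⟨R, hR, hR'⟩ := hf n
  obtain ⟨S, hS, hS'⟩ := hg n
  refine ⟨R + S, fun t ht => by simp [hR t ht, hS t ht], fun k => ?_⟩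
  rw [Polynomial.coeff_add]
  refine (IsUltrametricDist.norm_add_le_max _ _).trans (max_le ?_ ?_)
  · exact (hR' k).trans (by gcongr; exact le_max_left _ _)
  · exact (hS' k).trans (by gcongr; exact le_max_right _ _)

lemma SmlGood.mul {ρ : ℝ} (hρ : 0 ≤ ρ) {f g : ℕ → K} (hf : SmlGood ρ f) (hg : SmlGood ρ g) :
    SmlGood ρ (fun n => f n * g n) := by
  obtain ⟨C, hC, hf⟩ := hf
  obtain ⟨D, hD, hg⟩ := hg
  refine ⟨C * D, by positivity, fun n => ?_⟩
  obtain ⟨R, hR, hR'⟩ := hf n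
  obtain ⟨S, hS, hS'⟩ := hg n
  refine ⟨R * S, fun t ht => by simp [hR t ht, hS t ht], fun k => ?_⟩
  rw [Polynomial.coeff_mul]
  apply IsUltrametricDist.norm_sum_le_of_forall_le_of_nonneg (by positivity)
  intro ij hij
  rw [Finset.HasAntidiagonal.mem_antidiagonal] at hij
  rw [norm_mul, ← hij, pow_add]
  calc _ ≤ (C * ρ ^ ij.1) * (D * ρ ^ ij.2) := by
        gcongr
        · exact hR' _
        · exact hS' _
    _ = _ := by ring

lemma SmlGood.poly {ρ : ℝ} (hρ : 0 < ρ) (P : Polynomial K) :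
    SmlGood ρ (fun n => P.eval (n : K)) := by
  refine ⟨∑ k ∈ P.support, ‖P.coeff k‖ / ρ ^ k, by positivity, fun n => ⟨P, fun _ _ => rfl, fun k => ?_⟩⟩
  by_cases hk : k ∈ P.support
  · have := Finset.single_le_sum (f := fun k => ‖P.coeff k‖ / ρ ^ k) (fun i _ => by positivity) hk
    rw [← div_le_iff₀ (by positivity)]
    exact this
  · rw [Polynomial.notMem_support_iff.1 hk, norm_zero]
    positivity

lemma SmlGood.sum {ρ : ℝ} (hρ : 0 < ρ) {s : ℕ} (f : Fin s → ℕ → K) (hf : ∀ i, SmlGood ρ (f i)) :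
    SmlGood ρ (fun n => ∑ i, f i n) := by
  induction s with
  | zero => simpa using SmlGood.poly hρ (0 : Polynomial K)
  | succ s ih =>
    simp only [Fin.sum_univ_succ]
    exact (hf 0).add hρ.le (ih _ fun i => hf _)

lemma sml_intPoly_coeff (P : Polynomial ℤ) (k : ℕ) :
    ‖(P.map (Int.castRingHom K)).coeff k‖ ≤ 1 := by
  rw [Polynomial.coeff_map]
  exact IsUltrametricDist.norm_intCast_le_one K _

lemma SmlGood.pow [CharZero K] {ρ : ℝ} (hρ : 0 ≤ ρ) (hρ1 : ρ ≤ 1) (z : K)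
    (hz : ∀ i : ℕ, ‖z ^ i / (i.factorial : K)‖ ≤ ρ ^ i) :
    SmlGood ρ (fun n => (1 + z) ^ n) := by
  refine ⟨1, zero_le_one, fun n => ?_⟩
  refine ⟨∑ i ∈ Finset.range (n + 1), Polynomial.C (z ^ i / (i.factorial : K)) *
    ((descPochhammer ℤ i).map (Int.castRingHom K)), fun t ht => ?_, fun k => ?_⟩
  · change _ = (1 + z) ^ t
    rw [Polynomial.eval_finsetSum, add_comm 1 z, add_pow]
    simp only [one_pow, mul_one, Polynomial.eval_mul, Polynomial.eval_C, descPochhammer_map]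
    rw [← Finset.sum_subset (Finset.range_mono (show t + 1 ≤ n + 1 by omega))]
    · refine Finset.sum_congr rfl fun i hi => ?_
      rw [descPochhammer_eval_eq_descFactorial, Nat.descFactorial_eq_factorial_mul_choose]
      have : (i.factorial : K) ≠ 0 := by exact_mod_cast i.factorial_ne_zero
      push_cast
      field_simp
    · intro i _ hi
      rw [descPochhammer_eval_eq_descFactorial, Nat.descFactorial_eq_zero_iff_lt.2]
      · simp
      · simpa using hi
  · rw [Polynomial.finsetSum_coeff, one_mul]
    apply IsUltrametricDist.norm_sum_le_of_forall_le_of_nonneg (by positivity)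
    intro i _
    rw [Polynomial.coeff_C_mul, norm_mul]
    by_cases hik : i < k
    · rw [Polynomial.coeff_eq_zero_of_natDegree_lt]
      · simp; positivity
      · refine lt_of_le_of_lt Polynomial.natDegree_map_le ?_
        rwa [descPochhammer_natDegree]
    · calc _ ≤ ρ ^ i * 1 := by
            gcongr
            · exact hz i
            · exact sml_intPoly_coeff _ _
        _ ≤ ρ ^ k := by
            rw [mul_one]
            exact pow_le_pow_of_le_one hρ hρ1 (by omega)

lemma sml_div {ρ C : ℝ} (hρ : 0 ≤ ρ) (hρ1 : ρ ≤ 1) (hC : 0 ≤ C) (t : K) (ht : ‖t‖ ≤ 1)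
    (R Q : Polynomial K) (h : R = (Polynomial.X - Polynomial.C t) * Q)
    (hR : ∀ k, ‖R.coeff k‖ ≤ C * ρ ^ k) (k : ℕ) : ‖Q.coeff k‖ ≤ (C * ρ) * ρ ^ k := by
  have main : ∀ j k : ℕ, Q.natDegree < k + j → ‖Q.coeff k‖ ≤ (C * ρ) * ρ ^ k := by
    intro j
    induction j with
    | zero =>
      intro k hk
      rw [Polynomial.coeff_eq_zero_of_natDegree_lt (by simpa using hk), norm_zero]
      positivity
    | succ j ih =>
      intro k hk
      have h1 : Q.coeff k = R.coeff (k + 1) + t * Q.coeff (k + 1) := by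
        rw [h, sub_mul, Polynomial.coeff_sub, Polynomial.coeff_X_mul, Polynomial.coeff_C_mul]
        ring
      rw [h1]
      refine (IsUltrametricDist.norm_add_le_max _ _).trans (max_le ?_ ?_)
      · exact (hR (k + 1)).trans (le_of_eq (by ring))
      · rw [norm_mul]
        have h2 := ih (k + 1) (by omega)
        calc ‖t‖ * ‖Q.coeff (k + 1)‖ ≤ 1 * ((C * ρ) * ρ ^ (k + 1)) := by gcongr
          _ ≤ (C * ρ) * ρ ^ k := by
            rw [one_mul]
            exact mul_le_mul_of_nonneg_left (pow_le_pow_of_le_one hρ hρ1 (by omega)) (by positivity)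
  exact main (Q.natDegree + 1) k (by omega)

lemma sml_eval_le [CharZero K] {ρ : ℝ} (hρ : 0 ≤ ρ) (hρ1 : ρ ≤ 1) (T : Finset ℕ) (t : ℕ) :
    ∀ (C : ℝ) (_ : 0 ≤ C) (R : Polynomial K) (_ : ∀ k, ‖R.coeff k‖ ≤ C * ρ ^ k)
      (_ : ∀ x ∈ T, R.eval (x : K) = 0), ‖R.eval (t : K)‖ ≤ C * ρ ^ T.card := by
  have hnat : ∀ m : ℕ, ‖(m : K)‖ ≤ 1 := IsUltrametricDist.norm_natCast_le_one K
  induction T using Finset.induction_on with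
  | empty =>
    intro C hC R hR _
    rw [Polynomial.eval_eq_sum_range]
    simp only [Finset.card_empty, pow_zero, mul_one]
    apply IsUltrametricDist.norm_sum_le_of_forall_le_of_nonneg hC
    intro i _
    rw [norm_mul, norm_pow]
    calc _ ≤ (C * 1) * 1 := by
          gcongr
          · exact (hR i).trans (by gcongr; exact pow_le_one₀ hρ hρ1)
          · exact pow_le_one₀ (norm_nonneg _) (hnat t)
      _ = C := by ring
  | insert x T hx ih =>
    intro C hC R hR h0
    obtain ⟨Q, hQ⟩ := Polynomial.dvd_iff_isRoot.2 (h0 x (by simp))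
    have h1 := ih (C * ρ) (by positivity) Q (sml_div hρ hρ1 hC _ (hnat x) R Q hQ hR) (by
      intro y hy
      have h2 := h0 y (by simp [hy])
      rw [hQ, Polynomial.eval_mul] at h2
      rcases mul_eq_zero.1 h2 with h3 | h3
      · simp only [Polynomial.eval_sub, Polynomial.eval_X, Polynomial.eval_C, sub_eq_zero,
          Nat.cast_inj] at h3
        exact absurd (h3 ▸ hy) hx
      · exact h3)
    rw [hQ, Polynomial.eval_mul, norm_mul, Finset.card_insert_of_notMem hx]
    have h4 : ‖(Polynomial.X - Polynomial.C (x : K)).eval (t : K)‖ ≤ 1 := by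
      simp only [Polynomial.eval_sub, Polynomial.eval_X, Polynomial.eval_C]
      exact (sml_norm_sub _ _).trans (max_le (hnat t) (hnat x))
    calc _ ≤ 1 * (C * ρ * ρ ^ T.card) := by gcongr
      _ = _ := by ring

lemma SmlGood.eq_zero [CharZero K] {ρ : ℝ} (hρ : 0 ≤ ρ) (hρ1 : ρ < 1) {f : ℕ → K}
    (hf : SmlGood ρ f) (hinf : {n | f n = 0}.Infinite) (t : ℕ) : f t = 0 := by
  obtain ⟨C, hC, hf⟩ := hf
  have h1 : ∀ k : ℕ, ‖f t‖ ≤ C * ρ ^ k := by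
    intro k
    obtain ⟨T, hT, hk⟩ := hinf.exists_subset_card_eq k
    obtain ⟨R, hR, hR'⟩ := hf (max t (T.sup id))
    have := sml_eval_le hρ hρ1.le T t C hC R hR' (by
      intro x hx
      rw [hR x (le_max_of_le_right (Finset.le_sup (f := id) hx))]
      exact hT hx)
    rwa [hR t (le_max_left _ _), hk] at this
  have h2 : Filter.Tendsto (fun k : ℕ => C * ρ ^ k) Filter.atTop (nhds 0) := by
    simpa using (tendsto_pow_atTop_nhds_zero_of_lt_one hρ hρ1).const_mul C
  have h3 := ge_of_tendsto' h2 h1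
  simpa using h3
end

lemma sml_exists_pow (p : ℕ) [hp : Fact p.Prime] {s : ℕ} (r : Fin s → PadicAlgCl p)
    (hr : ∀ i, ‖r i‖ = 1) (ε : ℝ) (hε : 0 < ε) : ∃ M : ℕ, 0 < M ∧ ∀ i, ‖r i ^ M - 1‖ < ε := by
  let L : IntermediateField ℚ_[p] (PadicAlgCl p) := IntermediateField.adjoin ℚ_[p] (Set.range r)
  have : FiniteDimensional ℚ_[p] L :=
    IntermediateField.finiteDimensional_adjoin fun x _ => Algebra.IsIntegral.isIntegral x
  let V : Submodule ℚ_[p] (PadicAlgCl p) := L.toSubalgebra.toSubmodule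
  have : FiniteDimensional ℚ_[p] V := this
  have : ProperSpace V := FiniteDimensional.proper ℚ_[p] V
  have hmem : ∀ i n, r i ^ n ∈ V := fun i n =>
    pow_mem (S := L) (IntermediateField.subset_adjoin _ _ ⟨i, rfl⟩) n
  let x : ℕ → (Fin s → V) := fun n i => ⟨r i ^ n, hmem i n⟩
  have hx : ∀ n, x n ∈ Metric.closedBall (0 : Fin s → V) 1 := by
    intro n
    rw [mem_closedBall_zero_iff, pi_norm_le_iff_of_nonneg zero_le_one]
    intro i
    change ‖r i ^ n‖ ≤ 1
    rw [norm_pow, hr, one_pow]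
  obtain ⟨a, -, φ, hφ, hlim⟩ := tendsto_subseq_of_bounded Metric.isBounded_closedBall hx
  have hc := hlim.cauchySeq
  obtain ⟨N, hN⟩ := Metric.cauchySeq_iff'.1 hc ε hε
  have h1 := hN (N + 1) (by omega)
  have hlt : φ N < φ (N + 1) := hφ (by omega)
  refine ⟨φ (N + 1) - φ N, by omega, fun i => ?_⟩
  rw [dist_pi_lt_iff hε] at h1
  have h2 := h1 i
  rw [dist_eq_norm] at h2
  change ‖r i ^ φ (N + 1) - r i ^ φ N‖ < ε at h2
  have e : r i ^ φ (N + 1) - r i ^ φ N = r i ^ φ N * (r i ^ (φ (N + 1) - φ N) - 1) := by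
    rw [mul_sub, mul_one, ← pow_add, Nat.add_sub_cancel' hlt.le]
  rwa [e, norm_mul, norm_pow, hr, one_pow, one_mul] at h2

lemma sml_factorial_bound (p : ℕ) [hp : Fact p.Prime] (z : PadicAlgCl p)
    (hz : ‖z‖ ≤ (p : ℝ)⁻¹ ^ 2) (i : ℕ) :
    ‖z ^ i / (i.factorial : PadicAlgCl p)‖ ≤ (p : ℝ)⁻¹ ^ i := by
  have hpp : (0 : ℝ) < p := by exact_mod_cast hp.1.pos
  have h1 : (p : ℝ)⁻¹ ^ i ≤ ‖(i.factorial : PadicAlgCl p)‖ := by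
    rw [← map_natCast (algebraMap ℚ_[p] (PadicAlgCl p)), PadicAlgCl.norm_extends,
      Padic.norm_eq_zpow_neg_valuation (by exact_mod_cast i.factorial_ne_zero),
      Padic.valuation_natCast, zpow_neg, zpow_natCast, ← inv_pow]
    apply pow_le_pow_of_le_one (by positivity)
    · exact inv_le_one_of_one_le₀ (by exact_mod_cast hp.1.one_lt.le)
    · have h2 := sub_one_mul_padicValNat_factorial (p := p) i
      have h3 : 1 ≤ p - 1 := by have := hp.1.two_le; omega
      have h4 : padicValNat p i.factorial ≤ (p - 1) * padicValNat p i.factorial :=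
        Nat.le_mul_of_pos_left _ h3
      omega
  have h0 : 0 < (p : ℝ)⁻¹ ^ i := by positivity
  rw [norm_div, div_le_iff₀ (h0.trans_le h1), norm_pow]
  calc ‖z‖ ^ i ≤ ((p : ℝ)⁻¹ ^ 2) ^ i := by gcongr
    _ = (p : ℝ)⁻¹ ^ i * (p : ℝ)⁻¹ ^ i := by rw [← pow_mul, ← pow_add]; congr 1; ring
    _ ≤ _ := by gcongr

/-- The shift operator on sequences. -/
def smlShift : Module.End ℂ (ℕ → ℂ) where
  toFun f := fun n => f (n + 1)
  map_add' _ _ := rfl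
  map_smul' _ _ := rfl

lemma sml_mem_gen (l : ℂ) : ∀ (d : ℕ) (Q : Polynomial ℂ), Q.natDegree < d →
    ((smlShift - l • (1 : Module.End ℂ (ℕ → ℂ))) ^ d) (fun n : ℕ => Q.eval (n : ℂ) * l ^ n) = 0 := by
  intro d
  induction d with
  | zero => intro Q h; omega
  | succ d ih =>
    intro Q h
    rw [pow_succ, Module.End.mul_apply]
    have e : (smlShift - l • (1 : Module.End ℂ (ℕ → ℂ))) (fun n : ℕ => Q.eval (n : ℂ) * l ^ n)
        = l • (fun n : ℕ => (Q.comp (Polynomial.X + 1) - Q).eval (n : ℂ) * l ^ n) := by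
      funext n
      simp [smlShift, pow_succ]
      ring
    rw [e, map_smul]
    by_cases hd : d = 0
    · subst hd
      have : Q.natDegree = 0 := by omega
      rw [Polynomial.eq_C_of_natDegree_eq_zero this]
      ext n
      simp
    · rw [ih, smul_zero]
      by_cases h0 : Q.natDegree = 0
      · rw [Polynomial.eq_C_of_natDegree_eq_zero h0]
        simp
        omega
      · have ht : Q.comp (Polynomial.X + 1) = Polynomial.taylor 1 Q := by
          rw [Polynomial.taylor_apply, Polynomial.C_1]
        have hQ0 : Q ≠ 0 := by rintro rfl; simp at h0
        rw [ht]
        have h1 := Polynomial.degree_sub_lt_right (p := Polynomial.taylor 1 Q) (q := Q)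
          (Polynomial.degree_taylor Q 1) hQ0 (Polynomial.leadingCoeff_taylor 1 Q)
        by_cases h2 : Polynomial.taylor 1 Q - Q = 0
        · rw [h2]; simp; omega
        · have := Polynomial.natDegree_lt_natDegree h2 h1
          omega

lemma sml_exp_indep {s : ℕ} (Q : Fin s → Polynomial ℂ) (l : Fin s → ℂ) (hl0 : ∀ i, l i ≠ 0)
    (hl : Function.Injective l) (h : ∀ n : ℕ, ∑ i, (Q i).eval (n : ℂ) * l i ^ n = 0) (i : Fin s) :
    Q i = 0 := by
  have hind := (Module.End.independent_maxGenEigenspace smlShift).comp hl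
  have hmem : ∀ i, (fun n : ℕ => (Q i).eval (n : ℂ) * l i ^ n) ∈
      smlShift.maxGenEigenspace (l i) := by
    intro i
    rw [Module.End.mem_maxGenEigenspace]
    exact ⟨_, sml_mem_gen (l i) _ (Q i) (Nat.lt_succ_self _)⟩
  have h1 : (fun n : ℕ => (Q i).eval (n : ℂ) * l i ^ n) = 0 := by
    refine (iSupIndep_iff_finsetSum_eq_zero_imp_eq_zero _).1 hind Finset.univ
      (fun i => fun n : ℕ => (Q i).eval (n : ℂ) * l i ^ n) (fun i _ => hmem i) ?_ i (Finset.mem_univ i)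
    funext n
    simpa using h n
  apply Polynomial.eq_zero_of_infinite_isRoot
  refine (Set.infinite_range_of_injective (Nat.cast_injective (R := ℂ))).mono ?_
  rintro _ ⟨n, rfl⟩
  have := congrFun h1 n
  simpa [hl0 i] using this

lemma sml_main {s : ℕ} (Q : Fin s → Polynomial ℂ) (r : Fin s → ℂ) (hr : ∀ i, r i ≠ 0)
    (hnd : ∀ i j, i ≠ j → ∀ k : ℕ, 0 < k → r i ^ k ≠ r j ^ k)
    (hinf : {n : ℕ | ∑ i, (Q i).eval (n : ℂ) * r i ^ n = 0}.Infinite) (i : Fin s) : Q i = 0 := by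
  obtain ⟨p, hp, φ, hφ⟩ := sml_embedding r hr
  have hpp : (0 : ℝ) < p := by exact_mod_cast hp.1.pos
  have hρ1 : (p : ℝ)⁻¹ < 1 := inv_lt_one_of_one_lt₀ (by exact_mod_cast hp.1.one_lt)
  obtain ⟨M, hM, hMr⟩ := sml_exists_pow p (fun i => φ (r i)) hφ ((p : ℝ)⁻¹ ^ 2) (by positivity)
  -- pigeonhole on residues mod M
  obtain ⟨a, ha⟩ : ∃ a : ℕ, {m : ℕ | ∑ i, (Q i).eval ((a + M * m : ℕ) : ℂ) * r i ^ (a + M * m) = 0}.Infinite := by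
    by_contra! hcon
    apply hinf
    have hcon' : ∀ a : ℕ, {m : ℕ | ∑ i, (Q i).eval ((a + M * m : ℕ) : ℂ) * r i ^ (a + M * m) = 0}.Finite :=
      fun a => Set.not_infinite.1 (by simpa using hcon a)
    refine ((Set.finite_lt_nat M).biUnion fun a _ => (hcon' a).image (fun m => a + M * m)).subset ?_
    intro n hn
    simp only [Set.mem_iUnion]
    refine ⟨n % M, Nat.mod_lt _ hM, n / M, ?_, Nat.mod_add_div n M⟩
    simp only [Set.mem_setOf_eq, Nat.mod_add_div]
    exact hn
  let S : Fin s → Polynomial ℂ := fun i =>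
    Polynomial.C (r i ^ a) * (Q i).comp (Polynomial.C (a : ℂ) + Polynomial.C (M : ℂ) * Polynomial.X)
  have hS : ∀ m : ℕ, ∑ i, (Q i).eval ((a + M * m : ℕ) : ℂ) * r i ^ (a + M * m)
      = ∑ i, (S i).eval (m : ℂ) * (r i ^ M) ^ m := by
    intro m
    refine Finset.sum_congr rfl fun i _ => ?_
    simp only [S, Polynomial.eval_mul, Polynomial.eval_C, Polynomial.eval_comp,
      Polynomial.eval_add, Polynomial.eval_X]
    push_cast
    rw [pow_add, pow_mul]
    ring
  have hgood : SmlGood (p : ℝ)⁻¹ (fun m : ℕ => ∑ i, ((S i).map φ).eval (m : PadicAlgCl p) *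
      (1 + (φ (r i) ^ M - 1)) ^ m) := by
    refine SmlGood.sum (by positivity) _ fun i => ?_
    refine SmlGood.mul (by positivity) (SmlGood.poly (by positivity) _) ?_
    exact SmlGood.pow (by positivity) hρ1.le _ (sml_factorial_bound p _ (hMr i).le)
  have hφS : ∀ m : ℕ, ∑ i, ((S i).map φ).eval (m : PadicAlgCl p) * (1 + (φ (r i) ^ M - 1)) ^ m
      = φ (∑ i, (S i).eval (m : ℂ) * (r i ^ M) ^ m) := by
    intro m
    rw [map_sum]
    refine Finset.sum_congr rfl fun i _ => ?_
    rw [add_sub_cancel, map_mul, map_pow, map_pow, ← map_natCast φ m, Polynomial.eval_map_apply]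
  have hzero : ∀ m : ℕ, ∑ i, (S i).eval (m : ℂ) * (r i ^ M) ^ m = 0 := by
    intro m
    have h1 := hgood.eq_zero (by positivity) hρ1 (by
      refine ha.mono fun m hm => ?_
      simp only [Set.mem_setOf_eq] at hm ⊢
      rw [hφS, ← hS, hm, map_zero]) m
    simp only [hφS] at h1
    exact (map_eq_zero φ).1 h1
  have hSi := sml_exp_indep S (fun i => r i ^ M) (fun i => pow_ne_zero _ (hr i))
    (fun i j hij => by
      by_contra hne
      exact hnd i j hne M hM hij) hzero i
  have h2 : (Q i).comp (Polynomial.C (a : ℂ) + Polynomial.C (M : ℂ) * Polynomial.X) = 0 := by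
    rcases mul_eq_zero.1 hSi with h | h
    · exact absurd (Polynomial.C_eq_zero.1 h) (pow_ne_zero _ (hr i))
    · exact h
  apply Polynomial.eq_zero_of_infinite_isRoot
  have hinj : Function.Injective (fun m : ℕ => ((a : ℂ) + M * m)) := by
    intro m n h
    have hM0 : (M : ℂ) ≠ 0 := by exact_mod_cast hM.ne'
    simpa [hM0] using h
  refine (Set.infinite_range_of_injective hinj).mono ?_
  rintro _ ⟨m, rfl⟩
  have := congrArg (Polynomial.eval (m : ℂ)) h2
  simpa [Polynomial.eval_comp] using this

theorem stmt3 (s : ℕ) (P : Fin s → Polynomial ℂ) (r : Fin s → ℂ)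
    (hPne : ∀ i, P i ≠ 0) (hrne : ∀ i, r i ≠ 0) (hrinj : Function.Injective r)
    (hnd1 : ∀ i, IsRootOfUnity (r i) → r i = 1)
    (hnd2 : ∀ i j, i ≠ j → ¬ IsRootOfUnity (r i / r j))
    (u : ℕ → ℂ) (hu : ∀ n : ℕ, u n = ∑ i, (P i).eval (n : ℂ) * r i ^ n)
    (c : ℂ) (hinf : {n : ℕ | u n = c}.Infinite) :
    ∃ (N : ℕ) (d : ℂ), ∀ n ≥ N, u n = d := by
  have hratio : ∀ i j, i ≠ j → ∀ k : ℕ, 0 < k → r i ^ k ≠ r j ^ k := by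
    intro i j hij k hk h
    exact hnd2 i j hij ⟨k, hk, by rw [div_pow, h, div_self (pow_ne_zero _ (hrne j))]⟩
  refine ⟨0, c, fun n _ => ?_⟩
  by_cases h1 : ∃ i, r i = 1
  · obtain ⟨i0, hi0⟩ := h1
    have key : ∀ n : ℕ, ∑ i, (P i - if i = i0 then Polynomial.C c else 0).eval (n : ℂ) * r i ^ n
        = u n - c := by
      intro n
      rw [hu n]
      simp only [Polynomial.eval_sub, sub_mul, Finset.sum_sub_distrib]
      congr 1
      rw [Finset.sum_eq_single i0]
      · simp [hi0]
      · intro b _ hb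
        simp [hb]
      · simp
    have h0 := sml_main (fun i => P i - if i = i0 then Polynomial.C c else 0) r hrne hratio
      (hinf.mono fun n hn => by
        simp only [Set.mem_setOf_eq] at hn ⊢
        rw [key, hn, sub_self])
    have := key n
    simp only [h0, Polynomial.eval_zero, zero_mul, Finset.sum_const_zero] at this
    exact (sub_eq_zero.1 this.symm)
  · push Not at h1
    have hone : ∀ i (k : ℕ), 0 < k → r i ^ k ≠ 1 := fun i k hk h => h1 i (hnd1 i ⟨k, hk, h⟩)
    have key : ∀ n : ℕ, ∑ i, ((Fin.cons (-Polynomial.C c) P : Fin (s + 1) → Polynomial ℂ) i).eval (n : ℂ) *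
        (Fin.cons 1 r : Fin (s + 1) → ℂ) i ^ n = u n - c := by
      intro n
      rw [Fin.sum_univ_succ, hu n]
      simp only [Fin.cons_zero, Fin.cons_succ]
      simp
      ring
    have h0 := sml_main (Fin.cons (-Polynomial.C c) P : Fin (s + 1) → Polynomial ℂ)
      (Fin.cons 1 r : Fin (s + 1) → ℂ)
      (by
        intro i
        refine Fin.cases ?_ (fun i => ?_) i
        · simp
        · simpa using hrne i)
      (by
        intro i j
        refine Fin.cases ?_ (fun i => ?_) i <;> refine Fin.cases ?_ (fun j => ?_) j
        · simp
        · intro _ k hk h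
          simp only [Fin.cons_zero, Fin.cons_succ, one_pow] at h
          exact hone j k hk h.symm
        · intro _ k hk h
          simp only [Fin.cons_zero, Fin.cons_succ, one_pow] at h
          exact hone i k hk h
        · intro hij k hk
          simp only [Fin.cons_succ]
          exact hratio i j (fun h => hij (by rw [h])) k hk)
      (hinf.mono fun n hn => by
        simp only [Set.mem_setOf_eq] at hn ⊢
        rw [key, hn, sub_self])
    have := key n
    simp only [h0, Polynomial.eval_zero, zero_mul, Finset.sum_const_zero] at this
    exact (sub_eq_zero.1 this.symm)
end
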